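/- Almost all cographs have a generalized Q-cospectral mate. Precisely, letting c(n) denote the number of isomorphism classes of cographs on n vertices and q(n) denote the number of isomorphism classes of cographs G on n vertices for which there exists a graph H on n vertices that is generalized Q-cospectral with G but not isomorphic to G, one has lim_{n→∞} q(n)/c(n) = 1. -/

import Mathlib

open SimpleGraph

/-- The characteristic polynomial (over `ℝ`) of the adjacency matrix of a finite graph. -/
noncomputable def adjCharPoly {V : Type} [Fintype V] [DecidableEq V] (G : SimpleGraph V) :
    Polynomial ℝ :=
  letI := Classical.decRel G.Adj
  Matrix.charpoly (G.adjMatrix ℝ)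

/-- Two finite graphs are cospectral if their adjacency matrices have the same
characteristic polynomial. -/
def Cospectral {V W : Type} [Fintype V] [DecidableEq V] [Fintype W] [DecidableEq W]
    (G : SimpleGraph V) (H : SimpleGraph W) : Prop :=
  adjCharPoly G = adjCharPoly H

/-- Generalized cospectrality: the graphs are cospectral and so are their complements. -/
def GenCospectral {V W : Type} [Fintype V] [DecidableEq V] [Fintype W] [DecidableEq W]
    (G : SimpleGraph V) (H : SimpleGraph W) : Prop :=
  Cospectral G H ∧ Cospectral Gᶜ Hᶜ

/-- A cograph is a graph with no induced path `P₄` (on 4 vertices). -/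
def IsCograph {V : Type} (G : SimpleGraph V) : Prop :=
  ¬ ∃ f : Fin 4 ↪ V, ∀ i j, G.Adj (f i) (f j) ↔ (SimpleGraph.pathGraph 4).Adj i j

/-- The number of isomorphism classes of graphs on `n` vertices satisfying an
isomorphism-invariant property `P`. -/
noncomputable def classCount (n : ℕ) (P : SimpleGraph (Fin n) → Prop) : ℕ :=
  Nat.card (Quot fun G H : {G : SimpleGraph (Fin n) // P G} => Nonempty (G.1 ≃g H.1))

/-- The characteristic polynomial (over `ℝ`) of the signless Laplacian matrix
`Q(G) = D(G) + A(G)` of a finite graph. -/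
noncomputable def qCharPoly {V : Type} [Fintype V] [DecidableEq V] (G : SimpleGraph V) :
    Polynomial ℝ :=
  letI := Classical.decRel G.Adj
  Matrix.charpoly (G.degMatrix ℝ + G.adjMatrix ℝ)

/-- Two finite graphs are `Q`-cospectral if their signless Laplacian matrices have the same
characteristic polynomial. -/
def QCospectral {V W : Type} [Fintype V] [DecidableEq V] [Fintype W] [DecidableEq W]
    (G : SimpleGraph V) (H : SimpleGraph W) : Prop :=
  qCharPoly G = qCharPoly H

/-- Generalized `Q`-cospectrality: the graphs are `Q`-cospectral and so are their
complements. -/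
def GenQCospectral {V W : Type} [Fintype V] [DecidableEq V] [Fintype W] [DecidableEq W]
    (G : SimpleGraph V) (H : SimpleGraph W) : Prop :=
  QCospectral G H ∧ QCospectral Gᶜ Hᶜ

/-!
A connected cograph with more than one vertex is, in a unique way, the complement of a disjoint
union of at least two connected cographs. Connected cographs with `n` vertices therefore correspond
to unordered rooted trees with `n` leaves in which every internal node has at least two children.

With `J` the all-ones matrix, conjugation by `J / 2 - 1` exchanges the signless Laplacians of the
claw and of its complement. All row and column sums of this matrix are one, so the similarity
extends to complements, and to disjoint unions with a fixed graph. Hence a connected cograph whose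
tree has a branch isomorphic to that of the claw has a generalized `Q`-cospectral mate. Of a
disconnected cograph, take the complement.

It remains to see that trees avoiding a fixed branch `A` are rare. Give an internal node of such a
tree a further child `A`; the result determines the tree. With `K = (log n) ^ (|A| + 1)`, the trees
on which this can be done in at least `K` ways number at most a `1 / K` fraction of all trees with
`n + |A|` leaves, and of those there are at most `(2 log (n + |A|)) ^ |A|` times as many as with `n`
leaves, since a tree is recovered from a suitable deletion of a leaf and a code with `O(log n)`
values. The trees with fewer than `K` ways have few different subtrees, and number only
`n ^ O(K)`, whereas there are at least `2 ^ (n - 2)` trees with `n` leaves.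
-/

/-- Unordered rooted trees in which every internal node has at least two children, axiomatised
by their number of leaves and by the operation `node` joining several trees at a new root. The
value of `node` at a multiset with fewer than two members is junk. -/
structure SeriesReducedTrees (T : Type*) where
  leafCount : T → ℕ
  leaf : T
  node : Multiset T → T
  leafCount_pos : ∀ t, 0 < leafCount t
  leafCount_leaf : leafCount leaf = 1
  leafCount_node : ∀ {s : Multiset T}, 2 ≤ s.card → leafCount (node s) = (s.map leafCount).sum
  node_injOn : Set.InjOn node {s | 2 ≤ s.card}
  eq_leaf_or_eq_node : ∀ t, t = leaf ∨ ∃ s : Multiset T, 2 ≤ s.card ∧ t = node s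
  finite_leafCount_eq : ∀ n, {t | leafCount t = n}.Finite

namespace SeriesReducedTrees

open Finset

variable {T : Type*} (S : SeriesReducedTrees T)

lemma card_le_sum_leafCount (s : Multiset T) : s.card ≤ (s.map S.leafCount).sum := by
  simpa using Multiset.card_nsmul_le_sum (s := s.map S.leafCount) (a := 1) (by
    simpa [Nat.one_le_iff_ne_zero] using fun t _ ↦ (S.leafCount_pos t).ne')

lemma two_le_leafCount_node {s : Multiset T} (hs : 2 ≤ s.card) : 2 ≤ S.leafCount (S.node s) :=
  S.leafCount_node hs ▸ hs.trans (S.card_le_sum_leafCount s)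

lemma leafCount_node_cons (t : T) {s : Multiset T} (hs : 1 ≤ s.card) :
    S.leafCount (S.node (t ::ₘ s)) = S.leafCount t + (s.map S.leafCount).sum := by
  rw [S.leafCount_node (by simpa using hs), Multiset.map_cons, Multiset.sum_cons]

lemma node_cons_inj {x y : T} {s r : Multiset T} (hs : 1 ≤ s.card) (hr : 1 ≤ r.card) :
    S.node (x ::ₘ s) = S.node (y ::ₘ r) ↔ x ::ₘ s = y ::ₘ r :=
  S.node_injOn.eq_iff (by simpa using hs) (by simpa using hr)

lemma exists_node_eq {t : T} (ht : 2 ≤ S.leafCount t) :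
    ∃ s : Multiset T, 2 ≤ s.card ∧ S.node s = t := by
  obtain rfl | ⟨s, hs, rfl⟩ := S.eq_leaf_or_eq_node t
  · simp [S.leafCount_leaf] at ht
  · exact ⟨s, hs, rfl⟩

/-- The finset of all trees with `n` leaves. -/
noncomputable def trees (n : ℕ) : Finset T := (S.finite_leafCount_eq n).toFinset

@[simp]
lemma mem_trees {n : ℕ} {t : T} : t ∈ S.trees n ↔ S.leafCount t = n := by
  simp [trees]

/-! ### Deleting and adding a leaf -/

/-- `S.LeafDeletion t t' i` says that `t'` arises from `t` by descending repeatedly into a smallest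
child until the current node has a leaf among its children, and deleting that leaf. The code `i` is
`2 * depth` if the node had just two children, so that it disappears, and `2 * depth + 1`
otherwise. -/
inductive LeafDeletion : T → T → ℕ → Prop
  | pair (t : T) : LeafDeletion (S.node (S.leaf ::ₘ {t})) t 0
  | leaf {s : Multiset T} (hs : 2 ≤ s.card) :
      LeafDeletion (S.node (S.leaf ::ₘ s)) (S.node s) 1
  | child {x x' : T} {i : ℕ} {s : Multiset T} (hx : LeafDeletion x x' i) (hs : 1 ≤ s.card)
      (hmin : ∀ y ∈ s, S.leafCount x ≤ S.leafCount y) :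
      LeafDeletion (S.node (x ::ₘ s)) (S.node (x' ::ₘ s)) (i + 2)

variable {S}

lemma LeafDeletion.leafCount_eq {t t' : T} {i : ℕ} (h : S.LeafDeletion t t' i) :
    S.leafCount t = S.leafCount t' + 1 := by
  induction h with
  | pair t => simp [S.leafCount_node_cons, S.leafCount_leaf, add_comm]
  | leaf hs =>
    rw [S.leafCount_node_cons _ (one_le_two.trans hs), S.leafCount_node hs, S.leafCount_leaf,
      add_comm]
  | child hx hs hmin ih =>
    rw [S.leafCount_node_cons _ hs, S.leafCount_node_cons _ hs, ih, add_right_comm]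

lemma LeafDeletion.left_unique {t₁ t' : T} {i : ℕ} (h₁ : S.LeafDeletion t₁ t' i) :
    ∀ {t₂ : T}, S.LeafDeletion t₂ t' i → t₁ = t₂ := by
  induction h₁ with
  | pair t => rintro t₂ ⟨⟩; rfl
  | @leaf s hs =>
    intro t₂ h₂
    generalize hs_eq : S.node s = t' at h₂
    cases h₂ with
    | leaf hr => rw [S.node_injOn hs hr hs_eq]
  | @child x x' i s hx hs hmin ih =>
    intro t₂ h₂
    generalize ht' : S.node (x' ::ₘ s) = t' at h₂
    generalize hij : i + 2 = j at h₂
    cases h₂ with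
    | pair | leaf => omega
    | @child y y' _ r hy hr hmin' =>
      obtain rfl := Nat.add_right_cancel hij
      obtain ⟨rfl, rfl⟩ | ⟨-, q, hq, hq'⟩ :=
        Multiset.cons_eq_cons.1 ((S.node_cons_inj hs hr).1 ht')
      · rw [ih hy]
      · -- Then `y'` would be a sibling of `x` and `x'` a sibling of `y`, so that
        -- `|x| ≤ |y'| < |y| ≤ |x'| < |x|`.
        have hx_le := hmin y' (hq ▸ Multiset.mem_cons_self _ _)
        have hy_le := hmin' x' (hq' ▸ Multiset.mem_cons_self _ _)
        have := hx.leafCount_eq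
        have := hy.leafCount_eq
        omega

lemma LeafDeletion.eq_of_lt_two {t : T} {p q : ℕ × T} (hp : S.LeafDeletion t p.2 p.1)
    (hq : S.LeafDeletion t q.2 q.1) (hp2 : p.1 < 2) (hq2 : q.1 < 2) : p = q := by
  have siblings_of_lt_two {i : ℕ} {t' : T} (h : S.LeafDeletion t t' i) (hi : i < 2) :
      ∃ s : Multiset T, 1 ≤ s.card ∧ t = S.node (S.leaf ::ₘ s) ∧
        (i = 0 ∧ s = {t'} ∨ i = 1 ∧ 2 ≤ s.card ∧ S.node s = t') := by
    cases h with
    | pair => exact ⟨_, by simp, rfl, .inl ⟨rfl, rfl⟩⟩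
    | leaf hs => exact ⟨_, one_le_two.trans hs, rfl, .inr ⟨rfl, hs, rfl⟩⟩
    | child => omega
  obtain ⟨s, hs, rfl, h⟩ := siblings_of_lt_two hp hp2
  obtain ⟨r, hr, hsr, h'⟩ := siblings_of_lt_two hq hq2
  obtain rfl := (Multiset.cons_inj_right _).1 ((S.node_cons_inj hs hr).1 hsr)
  obtain ⟨hp1, rfl⟩ | ⟨hp1, hcard, hp3⟩ := h <;> obtain ⟨hq1, h'⟩ | ⟨hq1, hcard', hq3⟩ := h'
  · exact Prod.ext (hp1.trans hq1.symm) (Multiset.singleton_inj.1 h')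
  · simp at hcard'
  · simp [h'] at hcard
  · exact Prod.ext (hp1.trans hq1.symm) (hp3.symm.trans hq3)

variable (S)

lemma exists_leafDeletion_of_leaf_mem {s : Multiset T} (hs : 2 ≤ s.card) (hl : S.leaf ∈ s) :
    ∃ t' i, S.LeafDeletion (S.node s) t' i ∧ i ≤ 1 := by
  obtain ⟨r, rfl⟩ := Multiset.exists_cons_of_mem hl
  obtain hr | hr : r.card = 1 ∨ 2 ≤ r.card := by simp only [Multiset.card_cons] at hs; omega
  · obtain ⟨x, rfl⟩ := Multiset.card_eq_one.1 hr
    exact ⟨_, _, .pair x, zero_le_one⟩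
  · exact ⟨_, _, .leaf hr, le_rfl⟩

lemma exists_eq_cons_min {s : Multiset T} (hs : 2 ≤ s.card) :
    ∃ x r, s = x ::ₘ r ∧ 1 ≤ r.card ∧ (∀ y ∈ r, S.leafCount x ≤ S.leafCount y) ∧
      2 * S.leafCount x ≤ S.leafCount (S.node s) := by
  classical
  obtain ⟨x, hx, hmin⟩ := exists_min_image s.toFinset S.leafCount
    (Multiset.toFinset_nonempty.2 (Multiset.card_pos.1 (by omega)))
  simp only [Multiset.mem_toFinset] at hx hmin
  obtain ⟨r, rfl⟩ := Multiset.exists_cons_of_mem hx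
  have hr : 1 ≤ r.card := by simpa using hs
  obtain ⟨y, hy⟩ := Multiset.card_pos_iff_exists_mem.1 hr
  refine ⟨x, r, rfl, hr, fun y hy ↦ hmin y (Multiset.mem_cons_of_mem hy), ?_⟩
  have hxy := hmin y (Multiset.mem_cons_of_mem hy)
  have hyr := Multiset.le_sum_of_mem (Multiset.mem_map_of_mem S.leafCount hy)
  rw [S.leafCount_node_cons x hr]
  omega

lemma exists_leafDeletion (t : T) (ht : 2 ≤ S.leafCount t) :
    ∃ t' i, S.LeafDeletion t t' i ∧ i < 2 * Nat.log 2 (S.leafCount t) := by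
  induction hn : S.leafCount t using Nat.strong_induction_on generalizing t with
  | _ n ih =>
  subst hn
  obtain ⟨s, hs, rfl⟩ := S.exists_node_eq ht
  by_cases hl : S.leaf ∈ s
  · obtain ⟨t', i, h, hi⟩ := S.exists_leafDeletion_of_leaf_mem hs hl
    have := Nat.log_pos one_lt_two ht
    exact ⟨t', i, h, by omega⟩
  · obtain ⟨x, r, rfl, hr, hmin, hx⟩ := S.exists_eq_cons_min hs
    obtain rfl | ⟨q, hq, rfl⟩ := S.eq_leaf_or_eq_node x
    · simp at hl
    have hq2 := S.two_le_leafCount_node hq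
    obtain ⟨x', i, h, hi⟩ := ih _ (by omega) _ hq2 rfl
    refine ⟨_, _, .child h hr hmin, ?_⟩
    have hlog : Nat.log 2 (S.leafCount (S.node q)) + 1 ≤
        Nat.log 2 (S.leafCount (S.node (S.node q ::ₘ r))) := by
      rw [← Nat.log_mul_base one_lt_two (by omega)]
      exact Nat.log_mono_right (by omega)
    omega

lemma card_trees_succ_le {n : ℕ} (hn : 1 ≤ n) :
    #(S.trees (n + 1)) ≤ 2 * Nat.log 2 (n + 1) * #(S.trees n) := by
  calc #(S.trees (n + 1)) ≤ #(range (2 * Nat.log 2 (n + 1)) ×ˢ S.trees n) := by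
        refine card_le_card_of_forall_subsingleton (fun t p ↦ S.LeafDeletion t p.2 p.1) ?_ ?_
        · intro t ht
          rw [mem_trees] at ht
          obtain ⟨t', i, h, hi⟩ := S.exists_leafDeletion t (by omega)
          refine ⟨(i, t'), mem_product.2 ⟨mem_range.2 (ht ▸ hi), S.mem_trees.2 ?_⟩, h⟩
          exact Nat.add_right_cancel (h.leafCount_eq ▸ ht)
        · rintro p - t₁ ⟨-, h₁⟩ t₂ ⟨-, h₂⟩
          exact h₁.left_unique h₂
    _ = _ := by rw [card_product, card_range]

lemma card_trees_add_le {n : ℕ} (hn : 1 ≤ n) (m : ℕ) :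
    #(S.trees (n + m)) ≤ (2 * Nat.log 2 (n + m)) ^ m * #(S.trees n) := by
  induction m with
  | zero => simp
  | succ m ih =>
    have hlog : Nat.log 2 (n + m) ≤ Nat.log 2 (n + m + 1) := Nat.log_mono_right (Nat.le_succ _)
    calc #(S.trees (n + m + 1))
        ≤ 2 * Nat.log 2 (n + m + 1) * #(S.trees (n + m)) := S.card_trees_succ_le (by omega)
      _ ≤ 2 * Nat.log 2 (n + m + 1) * ((2 * Nat.log 2 (n + m)) ^ m * #(S.trees n)) := by gcongr
      _ ≤ 2 * Nat.log 2 (n + m + 1) * ((2 * Nat.log 2 (n + m + 1)) ^ m * #(S.trees n)) := by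
        gcongr
      _ = _ := by rw [← mul_assoc, ← pow_succ', add_assoc]

lemma two_mul_card_trees_le {n : ℕ} (hn : 2 ≤ n) : 2 * #(S.trees n) ≤ #(S.trees (n + 1)) := by
  calc 2 * #(S.trees n) = #(range 2 ×ˢ S.trees n) := by rw [card_product, card_range]
    _ ≤ #(S.trees (n + 1)) :=
      card_le_card_of_forall_subsingleton (fun p t ↦ S.LeafDeletion t p.2 p.1) ?_ ?_
  · rintro ⟨i, t⟩ hp
    obtain ⟨hi, ht⟩ := mem_product.1 hp
    obtain rfl := S.mem_trees.1 ht
    obtain ⟨s, hs, rfl⟩ := S.exists_node_eq hn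
    obtain rfl | rfl : i = 0 ∨ i = 1 := by rw [mem_range] at hi; omega
    · exact ⟨_, S.mem_trees.2 (LeafDeletion.pair _).leafCount_eq, .pair _⟩
    · exact ⟨_, S.mem_trees.2 (LeafDeletion.leaf hs).leafCount_eq, .leaf hs⟩
  · rintro t - p ⟨hp, h⟩ q ⟨hq, h'⟩
    exact h.eq_of_lt_two h' (mem_range.1 (mem_product.1 hp).1) (mem_range.1 (mem_product.1 hq).1)

lemma two_pow_le_card_trees {n : ℕ} (hn : 2 ≤ n) : 2 ^ (n - 2) ≤ #(S.trees n) := by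
  induction n, hn using Nat.le_induction with
  | base =>
    refine card_pos.2 ⟨S.node (S.leaf ::ₘ {S.leaf}), S.mem_trees.2 ?_⟩
    rw [(LeafDeletion.pair _).leafCount_eq, S.leafCount_leaf]
  | succ n hn ih =>
    rw [Nat.sub_add_comm hn, pow_succ']
    exact (Nat.mul_le_mul_left 2 ih).trans (S.two_mul_card_trees_le hn)

/-! ### Grafting a branch -/

/-- `S.HasBranch A t` says that some node of `t`, together with all its descendants, forms a copy
of `A`. -/
inductive HasBranch (A : T) : T → Prop
  | self : HasBranch A A
  | child {s : Multiset T} {x : T} (hs : 2 ≤ s.card) (hx : x ∈ s) (h : HasBranch A x) :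
      HasBranch A (S.node s)

/-- `S.Graft A t t'` says that `t'` arises from `t` by giving some internal node a further child
`A`. -/
inductive Graft (A : T) : T → T → Prop
  | root {s : Multiset T} (hs : 2 ≤ s.card) : Graft A (S.node s) (S.node (A ::ₘ s))
  | child {x x' : T} {s : Multiset T} (hx : Graft A x x') (hs : 1 ≤ s.card) :
      Graft A (S.node (x ::ₘ s)) (S.node (x' ::ₘ s))

variable {S} {A : T}

lemma not_hasBranch_of_mem {s : Multiset T} (hs : 2 ≤ s.card) (h : ¬ S.HasBranch A (S.node s))
    {x : T} (hx : x ∈ s) : ¬ S.HasBranch A x :=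
  fun hA ↦ h (.child hs hx hA)

lemma not_hasBranch_of_node_cons {x : T} {s : Multiset T} (hs : 1 ≤ s.card)
    (h : ¬ S.HasBranch A (S.node (x ::ₘ s))) :
    ¬ S.HasBranch A x ∧ ∀ y ∈ s, ¬ S.HasBranch A y := by
  have h_mem := @not_hasBranch_of_mem _ _ _ (x ::ₘ s) (by simpa using hs) h
  exact ⟨h_mem (Multiset.mem_cons_self _ _), fun y hy ↦ h_mem (Multiset.mem_cons_of_mem hy)⟩

lemma Graft.leafCount_eq {t t' : T} (h : S.Graft A t t') :
    S.leafCount t' = S.leafCount t + S.leafCount A := by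
  induction h with
  | root hs => rw [S.leafCount_node_cons _ (one_le_two.trans hs), S.leafCount_node hs, add_comm]
  | child hx hs ih =>
    rw [S.leafCount_node_cons _ hs, S.leafCount_node_cons _ hs, ih, add_right_comm]

lemma Graft.hasBranch {t t' : T} (h : S.Graft A t t') : S.HasBranch A t' := by
  induction h with
  | root hs => exact .child (by simp; omega) (Multiset.mem_cons_self _ _) .self
  | child _ hs ih => exact .child (by simpa using hs) (Multiset.mem_cons_self _ _) ih

lemma Graft.notMem_cons {x x' : T} {s : Multiset T} (h : S.Graft A x x')
    (hs : ∀ y ∈ s, ¬ S.HasBranch A y) : A ∉ x' ::ₘ s := by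
  rw [Multiset.mem_cons, not_or]
  refine ⟨?_, fun hA ↦ hs A hA .self⟩
  rintro rfl
  have := h.leafCount_eq
  have := S.leafCount_pos x
  omega

lemma Graft.eq_and_eq_of_cons_eq_cons {x x' y' : T} {s r : Multiset T} (h : S.Graft A x x')
    (hr : ∀ z ∈ r, ¬ S.HasBranch A z) (heq : x' ::ₘ s = y' ::ₘ r) : x' = y' ∧ s = r := by
  obtain h' | ⟨-, q, -, rfl⟩ := Multiset.cons_eq_cons.1 heq
  · exact h'
  · exact absurd h.hasBranch (hr x' (Multiset.mem_cons_self _ _))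

lemma Graft.left_unique {t₁ t' : T} (h₁ : S.Graft A t₁ t') (hA₁ : ¬ S.HasBranch A t₁) :
    ∀ {t₂ : T}, S.Graft A t₂ t' → ¬ S.HasBranch A t₂ → t₁ = t₂ := by
  induction h₁ with
  | @root s hs =>
    intro t₂ h₂ hA₂
    generalize ht' : S.node (A ::ₘ s) = t' at h₂
    cases h₂ with
    | root hr =>
      rw [S.node_cons_inj (by omega) (by omega), Multiset.cons_inj_right] at ht'
      rw [ht']
    | child hy hr =>
      refine absurd ?_ (hy.notMem_cons (not_hasBranch_of_node_cons hr hA₂).2)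
      exact (S.node_cons_inj (by omega) hr).1 ht' ▸ Multiset.mem_cons_self _ _
  | @child x x' s hx hs ih =>
    intro t₂ h₂ hA₂
    obtain ⟨hAx, hAs⟩ := not_hasBranch_of_node_cons hs hA₁
    generalize ht' : S.node (x' ::ₘ s) = t' at h₂
    cases h₂ with
    | root hr =>
      refine absurd ?_ (hx.notMem_cons hAs)
      exact (S.node_cons_inj hs (by omega)).1 ht' ▸ Multiset.mem_cons_self _ _
    | child hy hr =>
      obtain ⟨hAy, hAr⟩ := not_hasBranch_of_node_cons hr hA₂
      obtain ⟨rfl, rfl⟩ :=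
        hx.eq_and_eq_of_cons_eq_cons hAr ((S.node_cons_inj hs hr).1 ht')
      rw [ih hAx hy hAy]

variable (S A)

lemma finite_graft (t : T) : {t' | S.Graft A t t'}.Finite :=
  (S.finite_leafCount_eq (S.leafCount t + S.leafCount A)).subset fun _ h ↦ h.leafCount_eq

/-- The finset of all trees that arise from `t` by grafting `A`. -/
noncomputable def grafts (t : T) : Finset T := (S.finite_graft A t).toFinset

variable {S A} in
@[simp]
lemma mem_grafts {t t' : T} : t' ∈ S.grafts A t ↔ S.Graft A t t' := by simp [grafts]

open Classical in
/-- The number of ways to graft `A` onto a member of the forest `s`, equal members of `s` being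
counted once. -/
noncomputable def graftCount (s : Multiset T) : ℕ := ∑ x ∈ s.toFinset, #(S.grafts A x)

variable {S A}

lemma graftCount_lt_card_grafts_node {s : Multiset T} (hs : 2 ≤ s.card)
    (hA : ¬ S.HasBranch A (S.node s)) : S.graftCount A s < #(S.grafts A (S.node s)) := by
  classical
  have hA_mem {x} (hx : x ∈ s) : ¬ S.HasBranch A x := not_hasBranch_of_mem hs hA hx
  have hA_erase (x) : ∀ z ∈ s.erase x, ¬ S.HasBranch A z :=
    fun z hz ↦ hA_mem (Multiset.mem_of_mem_erase hz)
  have hcard {x} (hx : x ∈ s) : 1 ≤ (s.erase x).card := by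
    rw [Multiset.card_erase_of_mem hx, Nat.pred_eq_sub_one]; omega
  let P : Finset (Σ _ : T, T) := s.toFinset.sigma (S.grafts A)
  have hP {p} (hp : p ∈ P) : p.1 ∈ s ∧ S.Graft A p.1 p.2 := by
    simpa [P] using hp
  let graftAt (p : Σ _ : T, T) : T := S.node (p.2 ::ₘ s.erase p.1)
  have hinj : Set.InjOn graftAt P := by
    rintro ⟨x, x'⟩ hp ⟨y, y'⟩ hq h
    obtain ⟨⟨hx, hxx'⟩, hy, hyy'⟩ := And.intro (hP hp) (hP hq)
    obtain ⟨rfl, -⟩ := hxx'.eq_and_eq_of_cons_eq_cons (hA_erase y)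
      ((S.node_cons_inj (hcard hx) (hcard hy)).1 h)
    obtain rfl := hxx'.left_unique (hA_mem hx) hyy' (hA_mem hy)
    rfl
  have hroot : S.node (A ::ₘ s) ∉ P.image graftAt := by
    simp only [mem_image, not_exists, not_and]
    intro p hp h
    obtain ⟨hx, hxx'⟩ := hP hp
    refine hxx'.notMem_cons (hA_erase p.1) ?_
    exact (S.node_cons_inj (hcard hx) (by omega)).1 h ▸ Multiset.mem_cons_self _ _
  calc S.graftCount A s < #(insert (S.node (A ::ₘ s)) (P.image graftAt)) := by
        rw [card_insert_of_notMem hroot, card_image_of_injOn hinj, card_sigma, graftCount]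
        exact Nat.lt_succ_self _
    _ ≤ #(S.grafts A (S.node s)) := card_le_card fun t ht ↦ ?_
  rw [mem_grafts]
  obtain rfl | ht := mem_insert.1 ht
  · exact .root hs
  · obtain ⟨p, hp, rfl⟩ := mem_image.1 ht
    obtain ⟨hx, hxx'⟩ := hP hp
    simpa [graftAt, Multiset.cons_erase hx] using hxx'.child (hcard hx)

lemma graftCount_eq_add [DecidableEq T] {s : Multiset T} {x : T} (hx : x ∈ s) :
    S.graftCount A s = #(S.grafts A x) + S.graftCount A (s.filter (· ≠ x)) := by
  rw [graftCount, graftCount]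
  convert (add_sum_erase s.toFinset _ (Multiset.mem_toFinset.2 hx)).symm using 3
  ext y
  simp [and_comm]

variable (S A) in
/-- The forests of `A`-free trees with at most `n` leaves in total and at most `k` ways to graft
`A` onto a member. -/
def sparseForests (n k : ℕ) : Set (Multiset T) :=
  {s | (∀ x ∈ s, ¬ S.HasBranch A x) ∧ (s.map S.leafCount).sum ≤ n ∧ S.graftCount A s ≤ k}

lemma eq_replicate_add_of_mem_sparseForests {n k : ℕ} {s : Multiset T}
    (hs : s ∈ S.sparseForests A n k) :
    (∃ j ≤ n, s = .replicate j S.leaf) ∨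
      ∃ i < k, ∃ r ∈ S.sparseForests A n i, ∃ q ∈ S.sparseForests A n (k - 1 - i),
        ∃ j ≤ n, s = .replicate j (S.node r) + q := by
  classical
  obtain ⟨hA, hsum, hk⟩ := hs
  have hcard := (S.card_le_sum_leafCount s).trans hsum
  by_cases hleaf : ∀ x ∈ s, x = S.leaf
  · exact .inl ⟨_, hcard, Multiset.eq_replicate_card.2 hleaf⟩
  right
  push Not at hleaf
  obtain ⟨x, hx, hx_ne⟩ := hleaf
  obtain rfl | ⟨r, hr, rfl⟩ := S.eq_leaf_or_eq_node x
  · exact absurd rfl hx_ne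
  set q := s.filter (· ≠ S.node r) with hq
  have hs_eq : s = .replicate (s.count (S.node r)) (S.node r) + q := by
    rw [← Multiset.filter_eq', hq, Multiset.filter_add_not]
  have hr_lt := graftCount_lt_card_grafts_node hr (hA _ hx)
  rw [graftCount_eq_add hx, ← hq] at hk
  refine ⟨S.graftCount A r, by omega, r, ⟨fun y ↦ not_hasBranch_of_mem hr (hA _ hx), ?_, le_rfl⟩,
    q, ⟨fun y hy ↦ hA y (Multiset.mem_of_mem_filter (p := (· ≠ S.node r)) hy), ?_, by omega⟩,
    s.count (S.node r), (Multiset.count_le_card _ _).trans hcard, hs_eq⟩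
  · rw [← S.leafCount_node hr]
    exact (Multiset.le_sum_of_mem (Multiset.mem_map_of_mem _ hx)).trans hsum
  · rw [hs_eq, Multiset.map_add, Multiset.sum_add] at hsum
    omega

lemma exists_finset_sparseForests_subset {n k : ℕ} (hk : k ≤ n) :
    ∃ F : Finset (Multiset T), S.sparseForests A n k ⊆ F ∧ #F ≤ (n + 1) ^ (3 * k + 1) := by
  classical
  induction k using Nat.strong_induction_on with
  | _ k ih =>
  choose! F hF_subset hF_card using fun i hi ↦ ih i hi (by omega)
  let leaves : Finset (Multiset T) := (range (n + 1)).image (.replicate · S.leaf)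
  let blocks (i : ℕ) : Finset (Multiset T) := ((F i ×ˢ F (k - 1 - i)) ×ˢ range (n + 1)).image
    fun p ↦ .replicate p.2 (S.node p.1.1) + p.1.2
  have hleaves : #leaves ≤ n + 1 := card_image_le.trans (card_range _).le
  have hblocks {i : ℕ} (hi : i < k) : #(blocks i) ≤ (n + 1) ^ (3 * k) :=
    calc #(blocks i) ≤ #(F i) * #(F (k - 1 - i)) * (n + 1) :=
          card_image_le.trans_eq (by rw [card_product, card_product, card_range])
      _ ≤ (n + 1) ^ (3 * i + 1) * (n + 1) ^ (3 * (k - 1 - i) + 1) * (n + 1) := by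
          gcongr
          · exact hF_card i hi
          · exact hF_card _ (by omega)
      _ = (n + 1) ^ (3 * k) := by
          rw [← pow_add, ← pow_succ]; congr 1; omega
  refine ⟨leaves ∪ (range k).biUnion blocks, fun s hs ↦ ?_, ?_⟩
  · simp only [coe_union, Set.mem_union, mem_coe, leaves, blocks, mem_image, mem_biUnion, mem_range,
      mem_product, Nat.lt_succ_iff]
    refine (eq_replicate_add_of_mem_sparseForests hs).imp ?_ ?_
    · rintro ⟨j, hj, rfl⟩
      exact ⟨j, hj, rfl⟩
    · rintro ⟨i, hi, r, hr, q, hq, j, hj, rfl⟩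
      exact ⟨i, hi, ((r, q), j), ⟨⟨hF_subset i hi hr, hF_subset _ (by omega) hq⟩, hj⟩, rfl⟩
  · calc #(leaves ∪ (range k).biUnion blocks) ≤ n + 1 + k * (n + 1) ^ (3 * k) := by
          refine (card_union_le _ _).trans (add_le_add hleaves ?_)
          simpa using card_biUnion_le_card_mul (range k) blocks _
            fun i hi ↦ hblocks (mem_range.1 hi)
      _ ≤ (n + 1) ^ (3 * k + 1) := by
          obtain rfl | hk0 := k.eq_zero_or_pos
          · simp
          · have := Nat.le_self_pow (n := 3 * k) (by omega) (n + 1)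
            rw [pow_succ]
            nlinarith

variable (S A) in
open Classical in
/-- The finset of all `A`-free trees with `n` leaves. -/
noncomputable def treesAvoiding (n : ℕ) : Finset T :=
  {t ∈ S.trees n | ¬ S.HasBranch A t}

@[simp]
lemma mem_treesAvoiding {n : ℕ} {t : T} :
    t ∈ S.treesAvoiding A n ↔ S.leafCount t = n ∧ ¬ S.HasBranch A t := by
  simp [treesAvoiding]

variable (S A)

lemma mul_card_le_card_grafts_le (n K : ℕ) :
    K * #{t ∈ S.treesAvoiding A n | K ≤ #(S.grafts A t)} ≤ #(S.trees (n + S.leafCount A)) := by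
  classical
  rw [mul_comm, ← mul_one #(S.trees _)]
  refine card_mul_le_card_mul (S.Graft A) (fun t ht ↦ ?_) (fun t' _ ↦ ?_)
  · simp only [mem_filter, mem_treesAvoiding] at ht
    refine ht.2.trans (card_le_card fun t' ht' ↦ ?_)
    rw [mem_grafts] at ht'
    rw [mem_bipartiteAbove, mem_trees, ht'.leafCount_eq, ht.1.1]
    exact ⟨rfl, ht'⟩
  · refine card_le_one.2 fun t ht u hu ↦ ?_
    simp only [mem_bipartiteBelow, mem_filter, mem_treesAvoiding] at ht hu
    exact ht.2.left_unique ht.1.1.2 hu.2 hu.1.1.2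

lemma card_card_grafts_lt_le {n K : ℕ} (hK : K ≤ n) :
    #{t ∈ S.treesAvoiding A n | #(S.grafts A t) < K} ≤ (n + 1) ^ (3 * K + 1) + 1 := by
  classical
  obtain ⟨F, hF, hF_card⟩ := exists_finset_sparseForests_subset (S := S) (A := A) hK
  calc #{t ∈ S.treesAvoiding A n | #(S.grafts A t) < K} ≤ #(insert S.leaf (F.image S.node)) := by
        refine card_le_card fun t ht ↦ ?_
        simp only [mem_filter, mem_treesAvoiding] at ht
        obtain ⟨⟨hn, hA⟩, hlt⟩ := ht
        obtain rfl | ⟨s, hs, rfl⟩ := S.eq_leaf_or_eq_node t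
        · exact mem_insert_self _ _
        · refine mem_insert_of_mem (mem_image_of_mem _ (hF ⟨?_, ?_, ?_⟩))
          · exact fun x ↦ not_hasBranch_of_mem hs hA
          · rw [← S.leafCount_node hs, hn]
          · exact ((graftCount_lt_card_grafts_node hs hA).trans hlt).le
    _ ≤ #(F.image S.node) + 1 := card_insert_le _ _
    _ ≤ (n + 1) ^ (3 * K + 1) + 1 := by gcongr; exact card_image_le.trans hF_card

lemma mul_card_treesAvoiding_le {n K : ℕ} (hK : K ≤ n) :
    K * #(S.treesAvoiding A n) ≤
      #(S.trees (n + S.leafCount A)) + K * ((n + 1) ^ (3 * K + 1) + 1) := by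
  rw [← card_filter_add_card_filter_not (s := S.treesAvoiding A n)
    (fun t ↦ K ≤ #(S.grafts A t)), mul_add]
  simp only [not_le]
  gcongr
  · exact S.mul_card_le_card_grafts_le A n K
  · exact S.card_card_grafts_lt_le A hK

end SeriesReducedTrees

/-! ### Trees without a given branch are rare -/

open Filter Topology

lemma eventually_mul_pow_le_two_pow (c d : ℕ) : ∀ᶠ k : ℕ in atTop, c * k ^ d ≤ 2 ^ k := by
  have h := ((isLittleO_pow_const_const_pow_of_one_lt d (r := (2 : ℝ))
    (by norm_num)).const_mul_left (c : ℝ)).def zero_lt_one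
  filter_upwards [h] with k hk
  rw [one_mul, Real.norm_of_nonneg (by positivity), Real.norm_of_nonneg (by positivity)] at hk
  exact_mod_cast hk

lemma tendsto_natLog_two_atTop : Tendsto (Nat.log 2) atTop atTop :=
  tendsto_atTop_atTop_of_monotone Nat.log_monotone fun b ↦
    ⟨2 ^ b, (Nat.log_pow one_lt_two b).ge⟩

lemma mul_pow_add_one_le_two_pow {n m : ℕ} (hm : 1 ≤ Nat.log 2 n)
    (h : 12 * Nat.log 2 n ^ (m + 2) ≤ 2 ^ Nat.log 2 n) :
    Nat.log 2 n * ((n + 1) ^ (3 * Nat.log 2 n ^ (m + 1) + 1) + 1) ≤ 2 ^ (n - 2) := by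
  have hn : 2 ^ Nat.log 2 n ≤ n := Nat.pow_log_le_self 2 (by rintro rfl; simp at hm)
  have hn' : n + 1 ≤ 2 ^ (Nat.log 2 n + 1) := Nat.lt_pow_succ_log_self one_lt_two n
  generalize Nat.log 2 n = L at *
  have hK : 1 ≤ L ^ (m + 1) := Nat.one_le_pow _ _ hm
  rw [pow_succ L (m + 1)] at h
  generalize L ^ (m + 1) = K at *
  have h2 : 1 ≤ 2 ^ ((L + 1) * (3 * K + 1)) := Nat.one_le_two_pow
  calc L * ((n + 1) ^ (3 * K + 1) + 1)
      ≤ 2 ^ L * ((2 ^ (L + 1)) ^ (3 * K + 1) + 1) := by gcongr; exact L.lt_two_pow_self.le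
    _ ≤ 2 ^ L * (2 * 2 ^ ((L + 1) * (3 * K + 1))) := by rw [← pow_mul]; gcongr; omega
    _ = 2 ^ ((L + 1) * (3 * K + 2)) := by ring
    _ ≤ 2 ^ (n - 2) := by
      refine Nat.pow_le_pow_right two_pos (Nat.le_sub_of_add_le ?_)
      nlinarith [Nat.mul_le_mul hK hm]

namespace SeriesReducedTrees

variable {T : Type*} (S : SeriesReducedTrees T) (A : T)

lemma eventually_log_mul_card_treesAvoiding_le : ∀ᶠ n in atTop,
    Nat.log 2 n * (S.treesAvoiding A n).card ≤
      (4 ^ S.leafCount A + 1) * (S.trees n).card := by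
  set m := S.leafCount A
  filter_upwards [eventually_ge_atTop m, tendsto_natLog_two_atTop.eventually_ge_atTop 1,
    tendsto_natLog_two_atTop.eventually (eventually_mul_pow_le_two_pow 12 (m + 2))]
    with n hnm hL h
  have hn : 2 ≤ n := (Nat.log_pos_iff.1 hL).1
  have hfew := (mul_pow_add_one_le_two_pow hL h).trans (S.two_pow_le_card_trees hn)
  have hlog : Nat.log 2 (n + m) ≤ 2 * Nat.log 2 n :=
    calc Nat.log 2 (n + m) ≤ Nat.log 2 (n * 2) := Nat.log_mono_right (by omega)
      _ = Nat.log 2 n + 1 := Nat.log_mul_base one_lt_two (by omega)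
      _ ≤ 2 * Nat.log 2 n := by omega
  have hK : Nat.log 2 n ^ (m + 1) ≤ n :=
    calc Nat.log 2 n ^ (m + 1) ≤ 12 * Nat.log 2 n ^ (m + 2) := by
          rw [pow_succ _ (m + 1)]; nlinarith [Nat.pow_pos (n := m + 1) hL]
      _ ≤ n := h.trans (Nat.pow_log_le_self 2 (by omega))
  have hbound := S.mul_card_treesAvoiding_le A hK
  have hadd := S.card_trees_add_le (by omega : 1 ≤ n) m
  generalize (n + 1) ^ (3 * Nat.log 2 n ^ (m + 1) + 1) + 1 = E at *
  generalize Nat.log 2 n = L at *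
  refine le_of_mul_le_mul_left ?_ (pow_pos hL m)
  calc L ^ m * (L * (S.treesAvoiding A n).card)
      = L ^ (m + 1) * (S.treesAvoiding A n).card := by ring
    _ ≤ (2 * Nat.log 2 (n + m)) ^ m * (S.trees n).card + L ^ (m + 1) * E :=
      hbound.trans (Nat.add_le_add_right hadd _)
    _ ≤ (2 * (2 * L)) ^ m * (S.trees n).card + L ^ m * (L * E) := by
      rw [pow_succ L m, mul_assoc (L ^ m)]; gcongr
    _ ≤ (2 * (2 * L)) ^ m * (S.trees n).card + L ^ m * (S.trees n).card := by gcongr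
    _ = L ^ m * ((4 ^ m + 1) * (S.trees n).card) := by
      rw [← mul_assoc 2, mul_pow]; ring

theorem tendsto_card_treesAvoiding_div_card_trees :
    Tendsto (fun n ↦ ((S.treesAvoiding A n).card : ℝ) / (S.trees n).card) atTop (𝓝 0) := by
  have hlog : Tendsto (fun n ↦ (4 ^ S.leafCount A + 1 : ℝ) / Nat.log 2 n) atTop (𝓝 0) :=
    (tendsto_natCast_atTop_atTop.comp tendsto_natLog_two_atTop).const_div_atTop _
  refine squeeze_zero' (.of_forall fun n ↦ by positivity) ?_ hlog
  filter_upwards [S.eventually_log_mul_card_treesAvoiding_le A,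
    tendsto_natLog_two_atTop.eventually_gt_atTop 0] with n h hL
  have hpos : 0 < (S.trees n).card :=
    (Nat.pow_pos two_pos).trans_le (S.two_pow_le_card_trees (Nat.log_pos_iff.1 hL).1)
  rw [div_le_div_iff₀ (by exact_mod_cast hpos) (by exact_mod_cast hL), mul_comm]
  exact_mod_cast h

end SeriesReducedTrees

/-! ### Isomorphism classes of finite graphs -/

/-- The isomorphism of complements induced by an isomorphism of graphs. -/
def complIso {V W : Type*} {G : SimpleGraph V} {H : SimpleGraph W} (e : G ≃g H) : Gᶜ ≃g Hᶜ :=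
  ⟨e.toEquiv, (Embedding.complEquiv e.toEmbedding).map_rel_iff'⟩

namespace GraphClass

/-- Isomorphism of finite graphs, as a setoid on the graphs with vertex set some `Fin n`. -/
instance isoSetoid : Setoid (Σ n : ℕ, SimpleGraph (Fin n)) where
  r G H := Nonempty (G.2 ≃g H.2)
  iseqv := ⟨fun _ ↦ ⟨.refl⟩, fun ⟨e⟩ ↦ ⟨e.symm⟩, fun ⟨e⟩ ⟨f⟩ ↦ ⟨e.trans f⟩⟩

end GraphClass

/-- The type of isomorphism classes of finite graphs; the class of a graph `G` on an arbitrary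
finite type is `GraphClass.mk G`. -/
def GraphClass : Type := Quotient GraphClass.isoSetoid

namespace GraphClass

variable {V W : Type*} [Finite V] [Finite W] {G : SimpleGraph V} {H : SimpleGraph W}
  {g h k : GraphClass}

/-- The isomorphism class of a finite graph. -/
noncomputable def mk (G : SimpleGraph V) : GraphClass :=
  Quotient.mk isoSetoid ⟨Nat.card V, G.map (Finite.equivFin V).toEmbedding⟩

/-- The number of vertices of the graphs in an isomorphism class. -/
noncomputable def order (g : GraphClass) : ℕ := (Quotient.out g).1

/-- A chosen member of an isomorphism class. -/
noncomputable def rep (g : GraphClass) : SimpleGraph (Fin g.order) := (Quotient.out g).2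

lemma mk_eq_mk : mk G = mk H ↔ Nonempty (G ≃g H) := by
  let eG := Iso.map (Finite.equivFin V) G
  let eH := Iso.map (Finite.equivFin W) H
  exact (Quotient.eq (r := isoSetoid)).trans
    ⟨fun ⟨e⟩ ↦ ⟨(eG.trans e).trans eH.symm⟩, fun ⟨e⟩ ↦ ⟨(eG.symm.trans e).trans eH⟩⟩

@[simp]
lemma mk_rep (g : GraphClass) : mk g.rep = g :=
  .trans (Quotient.sound ⟨(Iso.map (Finite.equivFin _) _).symm⟩) (Quotient.out_eq g)

@[elab_as_elim, induction_eliminator]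
lemma ind {motive : GraphClass → Prop} (mk : ∀ (n : ℕ) (G : SimpleGraph (Fin n)), motive (mk G))
    (g : GraphClass) : motive g :=
  mk_rep g ▸ mk _ g.rep

lemma nonempty_rep_mk_iso (G : SimpleGraph V) : Nonempty ((mk G).rep ≃g G) :=
  mk_eq_mk.1 (mk_rep (mk G))

@[simp]
lemma order_mk (G : SimpleGraph V) : (mk G).order = Nat.card V := by
  obtain ⟨e⟩ := nonempty_rep_mk_iso G
  simpa using Nat.card_congr e.toEquiv

noncomputable instance : Compl GraphClass := ⟨fun g ↦ mk g.repᶜ⟩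

lemma compl_mk (G : SimpleGraph V) : (mk G)ᶜ = mk Gᶜ := by
  obtain ⟨e⟩ := nonempty_rep_mk_iso G
  exact mk_eq_mk.2 ⟨complIso e⟩

@[simp]
protected lemma compl_compl (g : GraphClass) : gᶜᶜ = g := by
  induction g with | mk n G => rw [compl_mk, compl_mk, compl_compl]

lemma compl_injective : Function.Injective (compl : GraphClass → GraphClass) :=
  Function.LeftInverse.injective GraphClass.compl_compl

@[simp]
lemma order_compl (g : GraphClass) : gᶜ.order = g.order := by
  induction g with | mk n G => rw [compl_mk, order_mk, order_mk]

noncomputable instance : Add GraphClass := ⟨fun g h ↦ mk (g.rep ⊕g h.rep)⟩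

noncomputable instance : Zero GraphClass := ⟨mk (⊥ : SimpleGraph (Fin 0))⟩

lemma mk_add_mk (G : SimpleGraph V) (H : SimpleGraph W) : mk G + mk H = mk (G ⊕g H) := by
  obtain ⟨⟨eG⟩, ⟨eH⟩⟩ := And.intro (nonempty_rep_mk_iso G) (nonempty_rep_mk_iso H)
  exact mk_eq_mk.2 ⟨eG.sumCongr eH⟩

lemma mk_of_isEmpty [IsEmpty V] (G : SimpleGraph V) : mk G = 0 :=
  mk_eq_mk.2 ⟨⟨Equiv.equivOfIsEmpty _ _, fun {a} ↦ isEmptyElim a⟩⟩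

protected lemma add_comm (g h : GraphClass) : g + h = h + g := by
  induction g with | mk n G => induction h with | mk m H =>
  rw [mk_add_mk, mk_add_mk, mk_eq_mk]
  exact ⟨.sumComm⟩

protected lemma zero_add (g : GraphClass) : 0 + g = g := by
  induction g with | mk n G =>
  rw [← mk_of_isEmpty (⊥ : SimpleGraph (Fin 0)), mk_add_mk, mk_eq_mk]
  refine ⟨⟨Equiv.emptySum _ _, ?_⟩⟩
  rintro (a | a) (b | b)
  · exact a.elim0
  · exact a.elim0
  · exact b.elim0
  · simp

noncomputable instance : AddCommMonoid GraphClass where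
  add_assoc g h k := by
    induction g with | mk n G => induction h with | mk m H => induction k with | mk l K =>
    simp only [mk_add_mk, mk_eq_mk]
    exact ⟨.sumAssoc⟩
  zero_add := GraphClass.zero_add
  add_zero g := by rw [GraphClass.add_comm, GraphClass.zero_add]
  add_comm := GraphClass.add_comm
  nsmul := nsmulRec

@[simp]
lemma order_zero : (0 : GraphClass).order = 0 := by
  rw [← mk_of_isEmpty (⊥ : SimpleGraph (Fin 0)), order_mk, Nat.card_fin]

@[simp]
lemma order_add (g h : GraphClass) : (g + h).order = g.order + h.order := by
  induction g with | mk n G => induction h with | mk m H =>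
  simp only [mk_add_mk, order_mk, Nat.card_sum]

lemma order_sum (s : Multiset GraphClass) : s.sum.order = (s.map order).sum := by
  induction s using Multiset.induction_on with
  | empty => simp
  | cons g s ih => simp [ih]

lemma order_eq_zero : g.order = 0 ↔ g = 0 := by
  refine ⟨fun hg ↦ ?_, by rintro rfl; exact order_zero⟩
  induction g with | mk n G =>
  rw [order_mk, Nat.card_fin] at hg
  subst hg
  exact mk_of_isEmpty G

/-- The property of an isomorphism class that its members are connected. -/
def IsConnected (g : GraphClass) : Prop := g.rep.Connected

@[simp]
lemma isConnected_mk : (mk G).IsConnected ↔ G.Connected := by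
  obtain ⟨e⟩ := nonempty_rep_mk_iso G
  exact e.connected_iff

lemma IsConnected.order_pos (hg : g.IsConnected) : 0 < g.order :=
  Fin.pos_iff_nonempty.2 hg.nonempty

end GraphClass

/-! ### Components -/

section AdjClosed

variable {V W : Type*} {G : SimpleGraph V} {H : SimpleGraph W}

lemma exists_eq_and_reachable_of_adj_closed {f : G ↪g H}
    (hf : ∀ x y, H.Adj (f x) y → y ∈ Set.range f) {x : V} {w : W} (h : H.Reachable (f x) w) :
    ∃ z, f z = w ∧ G.Reachable x z := by
  rw [reachable_iff_reflTransGen] at h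
  induction h with
  | refl => exact ⟨x, rfl, .rfl⟩
  | tail _ hadj ih =>
    obtain ⟨z, rfl, hz⟩ := ih
    obtain ⟨z', rfl⟩ := hf _ _ hadj
    exact ⟨z', rfl, hz.trans (f.map_adj_iff.1 hadj).reachable⟩

lemma reachable_iff_of_adj_closed {f : G ↪g H}
    (hf : ∀ x y, H.Adj (f x) y → y ∈ Set.range f) {x y : V} :
    H.Reachable (f x) (f y) ↔ G.Reachable x y := by
  refine ⟨fun h ↦ ?_, fun h ↦ h.map f.toHom⟩
  obtain ⟨z, hz, hxz⟩ := exists_eq_and_reachable_of_adj_closed hf h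
  rwa [← f.injective hz]

lemma connectedComponent_map_injective_of_adj_closed {f : G ↪g H}
    (hf : ∀ x y, H.Adj (f x) y → y ∈ Set.range f) :
    Function.Injective (ConnectedComponent.map f.toHom) :=
  ConnectedComponent.ind₂ fun _ _ hxy ↦
    ConnectedComponent.sound ((reachable_iff_of_adj_closed hf).1 (ConnectedComponent.exact hxy))

lemma nonempty_toSimpleGraph_iso_map_of_adj_closed {f : G ↪g H}
    (hf : ∀ x y, H.Adj (f x) y → y ∈ Set.range f) (c : G.ConnectedComponent) :
    Nonempty (c.toSimpleGraph ≃g (c.map f.toHom).toSimpleGraph) := by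
  refine ConnectedComponent.ind (fun v ↦ ?_) c
  have hmem (x : V) : x ∈ (G.connectedComponentMk v).supp ↔
      f x ∈ ((G.connectedComponentMk v).map f.toHom).supp := by
    simp only [ConnectedComponent.mem_supp_iff, ConnectedComponent.map_mk, ConnectedComponent.eq]
    exact (reachable_iff_of_adj_closed hf).symm
  let φ : (G.connectedComponentMk v).supp → ((G.connectedComponentMk v).map f.toHom).supp :=
    fun x ↦ ⟨f x, (hmem x).1 x.2⟩
  have hφ : Function.Bijective φ := by
    refine ⟨fun x y h ↦ Subtype.ext (f.injective (congrArg Subtype.val h)), ?_⟩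
    rintro ⟨y, hy⟩
    obtain ⟨z, rfl, -⟩ :=
      exists_eq_and_reachable_of_adj_closed hf (ConnectedComponent.exact hy.symm)
    exact ⟨⟨z, (hmem z).2 hy⟩, rfl⟩
  exact ⟨⟨Equiv.ofBijective φ hφ, f.map_adj_iff⟩⟩

variable (G H)

lemma mem_range_sumInl_of_adj (x : V) (y : V ⊕ W)
    (h : (G ⊕g H).Adj (Embedding.sumInl (G := G) (H := H) x) y) :
    y ∈ Set.range (Embedding.sumInl (G := G) (H := H)) := by
  obtain y | y := y
  · exact ⟨y, rfl⟩
  · exact absurd h (not_adj_sum_inl_inr x y)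

lemma mem_range_sumInr_of_adj (x : W) (y : V ⊕ W)
    (h : (G ⊕g H).Adj (Embedding.sumInr (G := G) (H := H) x) y) :
    y ∈ Set.range (Embedding.sumInr (G := G) (H := H)) := by
  obtain y | y := y
  · exact absurd h.symm (not_adj_sum_inl_inr y x)
  · exact ⟨y, rfl⟩

lemma bijective_connectedComponent_sum :
    Function.Bijective (Sum.elim
      (ConnectedComponent.map (Embedding.sumInl (G := G) (H := H)).toHom)
      (ConnectedComponent.map (Embedding.sumInr (G := G) (H := H)).toHom)) := by
  refine ⟨Sum.elim_injective.2
    ⟨connectedComponent_map_injective_of_adj_closed (mem_range_sumInl_of_adj G H),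
      connectedComponent_map_injective_of_adj_closed (mem_range_sumInr_of_adj G H),
      ConnectedComponent.ind fun v ↦ ConnectedComponent.ind fun w h ↦
        not_reachable_sum_inl_inr v w (ConnectedComponent.exact h)⟩, ?_⟩
  refine ConnectedComponent.ind ?_
  rintro (v | w)
  · exact ⟨.inl (G.connectedComponentMk v), rfl⟩
  · exact ⟨.inr (H.connectedComponentMk w), rfl⟩

end AdjClosed

namespace GraphClass

variable {V W : Type*} [Finite V] [Finite W] {G : SimpleGraph V} {H : SimpleGraph W}
  {g h k : GraphClass}

/-- The isomorphism classes of the connected components of a graph, with multiplicity. -/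
noncomputable def componentClasses (G : SimpleGraph V) : Multiset GraphClass :=
  letI := Fintype.ofFinite G.ConnectedComponent
  ∑ c : G.ConnectedComponent, {mk c.toSimpleGraph}

lemma componentClasses_congr (e : G ≃g H) : componentClasses G = componentClasses H := by
  let := Fintype.ofFinite G.ConnectedComponent
  let := Fintype.ofFinite H.ConnectedComponent
  refine Fintype.sum_equiv e.connectedComponentEquiv _ _ fun c ↦ ?_
  rw [Multiset.singleton_inj, mk_eq_mk]
  exact nonempty_toSimpleGraph_iso_map_of_adj_closed (f := e.toEmbedding)
    (fun x y _ ↦ ⟨e.symm y, by simp⟩) c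

lemma componentClasses_sum (G : SimpleGraph V) (H : SimpleGraph W) :
    componentClasses (G ⊕g H) = componentClasses G + componentClasses H := by
  let := Fintype.ofFinite G.ConnectedComponent
  let := Fintype.ofFinite H.ConnectedComponent
  let := Fintype.ofFinite (G ⊕g H).ConnectedComponent
  simp only [componentClasses]
  rw [← (bijective_connectedComponent_sum G H).sum_comp, Fintype.sum_sum_type]
  congr 1 <;> refine Fintype.sum_congr _ _ fun c ↦ ?_ <;> rw [Multiset.singleton_inj, eq_comm]
  · exact mk_eq_mk.2
      (nonempty_toSimpleGraph_iso_map_of_adj_closed (mem_range_sumInl_of_adj G H) c)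
  · exact mk_eq_mk.2
      (nonempty_toSimpleGraph_iso_map_of_adj_closed (mem_range_sumInr_of_adj G H) c)

lemma componentClasses_of_connected (hG : G.Connected) : componentClasses G = {mk G} := by
  let := Fintype.ofFinite G.ConnectedComponent
  obtain ⟨v⟩ := hG.nonempty
  have := hG.preconnected.subsingleton_connectedComponent
  rw [componentClasses, Fintype.sum_subsingleton _ (G.connectedComponentMk v),
    Multiset.singleton_inj, mk_eq_mk]
  exact ⟨⟨Equiv.subtypeUnivEquiv fun x ↦ ConnectedComponent.sound (hG.preconnected x v), .rfl⟩⟩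

/-- The isomorphism classes of the connected components of the members of an isomorphism class,
with multiplicity. -/
noncomputable def components (g : GraphClass) : Multiset GraphClass := componentClasses g.rep

lemma components_mk (G : SimpleGraph V) : (mk G).components = componentClasses G := by
  obtain ⟨e⟩ := nonempty_rep_mk_iso G
  exact componentClasses_congr e

lemma components_add (g h : GraphClass) :
    (g + h).components = g.components + h.components := by
  induction g with | mk n G => induction h with | mk m H =>
  rw [mk_add_mk, components_mk, components_mk, components_mk, componentClasses_sum]

lemma components_zero : (0 : GraphClass).components = 0 := by
  simpa using components_add 0 0

lemma IsConnected.components_eq (hg : g.IsConnected) : g.components = {g} := by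
  induction g with | mk n G =>
  rw [components_mk, componentClasses_of_connected (isConnected_mk.1 hg)]

lemma components_sum {s : Multiset GraphClass} (hs : ∀ g ∈ s, g.IsConnected) :
    s.sum.components = s := by
  induction s using Multiset.induction_on with
  | empty => rw [Multiset.sum_zero, components_zero]
  | cons g s ih =>
    rw [Multiset.forall_mem_cons] at hs
    rw [Multiset.sum_cons, components_add, hs.1.components_eq, ih hs.2, Multiset.singleton_add]

lemma mk_eq_mk_induce_add_mk_induce_compl {s : Set V}
    (hs : ∀ x ∈ s, ∀ y ∉ s, ¬ G.Adj x y) : mk G = mk (G.induce s) + mk (G.induce sᶜ) := by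
  classical
  rw [mk_add_mk, mk_eq_mk]
  refine ⟨.symm ⟨Equiv.Set.sumCompl s, ?_⟩⟩
  rintro (⟨a, ha⟩ | ⟨a, ha⟩) (⟨b, hb⟩ | ⟨b, hb⟩)
  · simp
  · simpa using hs a ha b hb
  · simpa using fun h ↦ hs b hb a ha h.symm
  · simp

lemma exists_eq_add_of_not_isConnected (hg0 : g ≠ 0) (hg : ¬ g.IsConnected) :
    ∃ a b : GraphClass, g = a + b ∧ a ≠ 0 ∧ b ≠ 0 := by
  induction g with | mk n G =>
  simp only [ne_eq, ← order_eq_zero, order_mk, Nat.card_fin] at hg0 ⊢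
  have : NeZero n := ⟨hg0⟩
  have hG : ¬ G.Preconnected := fun h ↦ hg (isConnected_mk.2 ⟨h⟩)
  simp only [Preconnected, not_forall] at hG
  obtain ⟨u, v, huv⟩ := hG
  refine ⟨_, _, mk_eq_mk_induce_add_mk_induce_compl (s := {x | G.Reachable u x}) ?_, ?_, ?_⟩
  · exact fun x hx y hy hxy ↦ hy (hx.trans hxy.reachable)
  · rw [order_mk]
    exact (Nat.card_pos_iff.2 ⟨⟨u, .rfl⟩, inferInstance⟩).ne'
  · rw [order_mk]
    exact (Nat.card_pos_iff.2 ⟨⟨v, huv⟩, inferInstance⟩).ne'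

lemma exists_sum_eq (g : GraphClass) :
    ∃ s : Multiset GraphClass, (∀ h ∈ s, h.IsConnected) ∧ s.sum = g := by
  induction hn : g.order using Nat.strong_induction_on generalizing g with
  | _ n ih =>
  subst hn
  by_cases hg0 : g = 0
  · exact ⟨0, by simp, by simp [hg0]⟩
  by_cases hg : g.IsConnected
  · exact ⟨{g}, by simpa using hg, by simp⟩
  obtain ⟨a, b, rfl, ha, hb⟩ := exists_eq_add_of_not_isConnected hg0 hg
  simp only [ne_eq, ← order_eq_zero] at ha hb
  rw [order_add] at ih
  obtain ⟨s, hs, rfl⟩ := ih _ (by omega) a rfl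
  obtain ⟨t, ht, rfl⟩ := ih _ (by omega) b rfl
  exact ⟨s + t, fun h hh ↦ (Multiset.mem_add.1 hh).elim (hs h) (ht h), Multiset.sum_add s t⟩

lemma sum_components (g : GraphClass) : g.components.sum = g := by
  obtain ⟨s, hs, rfl⟩ := g.exists_sum_eq
  rw [components_sum hs]

protected lemma add_right_cancel (hgh : g + k = h + k) : g = h := by
  have := congrArg components hgh
  rw [components_add, components_add] at this
  rw [← sum_components g, ← sum_components h, add_right_cancel this]

end GraphClass

/-! ### Cographs -/

section Cograph

variable {V W : Type} {G : SimpleGraph V} {H : SimpleGraph W}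

lemma isCograph_iff_forall_not_path :
    IsCograph G ↔ ∀ a b c d, G.Adj a b → G.Adj b c → G.Adj c d → a ≠ c → a ≠ d → b ≠ d →
      ¬ G.Adj a c → ¬ G.Adj a d → ¬ G.Adj b d → False := by
  refine ⟨fun h a b c d hab hbc hcd nac nad nbd hac had hbd ↦ h ⟨⟨![a, b, c, d], ?_⟩, ?_⟩, ?_⟩
  · have hne := And.intro hab.ne (And.intro hbc.ne hcd.ne)
    intro i j
    fin_cases i <;> fin_cases j <;> simp_all [eq_comm]
  · intro i j
    change G.Adj (![a, b, c, d] i) (![a, b, c, d] j) ↔ _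
    clear h
    fin_cases i <;> fin_cases j <;> simp_all [pathGraph_adj, G.adj_comm]
  · rintro h ⟨f, hf⟩
    apply h (f 0) (f 1) (f 2) (f 3) <;> simp [hf, pathGraph_adj]

lemma IsCograph.of_embedding (hH : IsCograph H) (e : G ↪g H) : IsCograph G :=
  fun ⟨f, hf⟩ ↦ hH ⟨f.trans e.toEmbedding, fun i j ↦ e.map_adj_iff.trans (hf i j)⟩

lemma isCograph_congr (e : G ≃g H) : IsCograph G ↔ IsCograph H :=
  ⟨fun h ↦ h.of_embedding e.symm.toEmbedding, fun h ↦ h.of_embedding e.toEmbedding⟩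

lemma isCograph_of_subsingleton [Subsingleton V] (G : SimpleGraph V) : IsCograph G :=
  fun ⟨f, _⟩ ↦ zero_ne_one (f.injective (Subsingleton.elim (f 0) (f 1)))

/-- The complement of the path `a b c d` is the path `b d a c`. -/
lemma IsCograph.compl (hG : IsCograph G) : IsCograph Gᶜ := by
  rw [isCograph_iff_forall_not_path] at hG ⊢
  intro a b c d hab hbc hcd nac nad nbd hac had hbd
  simp only [compl_adj, not_and, not_not] at *
  exact hG b d a c (hbd nbd) (had nad).symm (hac nac) hab.1.symm hbc.1 hcd.1.symm
    (fun h ↦ hab.2 h.symm) hbc.2 (fun h ↦ hcd.2 h.symm)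

lemma isCograph_sum : IsCograph (G ⊕g H) ↔ IsCograph G ∧ IsCograph H := by
  refine ⟨fun h ↦ ⟨h.of_embedding .sumInl, h.of_embedding .sumInr⟩, fun ⟨hG, hH⟩ ↦ ?_⟩
  rw [isCograph_iff_forall_not_path] at *
  rintro (a | a) (b | b) (c | c) (d | d) <;> intro hab hbc hcd <;>
    simp only [sum_adj] at hab hbc hcd
  · simpa using hG a b c d hab hbc hcd
  · simpa using hH a b c d hab hbc hcd

lemma exists_adj_reachable_induce_compl_singleton (hG : G.Connected) {v x : V} (hx : x ≠ v) :
    ∃ y : ({v}ᶜ : Set V), G.Adj v y ∧ (G.induce {v}ᶜ).Reachable ⟨x, hx⟩ y := by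
  obtain ⟨p⟩ := hG.preconnected x v
  obtain ⟨d, -, ⟨hd, hxd⟩, hd'⟩ := p.exists_boundary_dart
    {y | ∃ hy : y ≠ v, (G.induce {v}ᶜ).Reachable ⟨x, hx⟩ ⟨y, hy⟩} ⟨hx, .rfl⟩ (fun h ↦ h.1 rfl)
  have hv : d.snd = v := by
    by_contra hne
    exact hd' ⟨hne, hxd.trans (Adj.reachable d.adj)⟩
  exact ⟨⟨d.fst, hd⟩, hv ▸ d.adj.symm, hxd⟩

/-- Otherwise some component of `G - v` contains an edge `ab` with only `a` adjacent to `v`; with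
a neighbour `z` of `v` in another component, `z v a b` is an induced path. -/
lemma IsCograph.preconnected_induce_compl_singleton (hG : IsCograph G) (hc : G.Connected)
    (hcc : Gᶜ.Connected) (v : V) : (G.induce {v}ᶜ).Preconnected := by
  classical
  rw [isCograph_iff_forall_not_path] at hG
  by_contra h
  simp only [Preconnected, not_forall] at h
  obtain ⟨p, q, hpq⟩ := h
  set K := G.induce {v}ᶜ
  obtain ⟨y, hvy⟩ := Reachable.nonempty_neighborSet_left (Ne.symm p.2) (hcc.preconnected v p)
  rw [mem_neighborSet, compl_adj] at hvy
  obtain ⟨x, hvx, hyx⟩ := exists_adj_reachable_induce_compl_singleton hc hvy.1.symm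
  obtain ⟨w⟩ := hyx.symm
  obtain ⟨d, hdw, hva, hvb⟩ := w.exists_boundary_dart {u | G.Adj v u} hvx hvy.2
  have hya : K.Reachable ⟨y, _⟩ d.fst :=
    hyx.trans ⟨w.takeUntil d.fst (w.dart_fst_mem_support_of_mem_darts hdw)⟩
  have hyb := hya.trans d.adj.reachable
  obtain ⟨z₀, hz₀⟩ : ∃ z₀, ¬ K.Reachable ⟨y, hvy.1.symm⟩ z₀ := by
    by_contra! hall
    exact hpq ((hall p).symm.trans (hall q))
  obtain ⟨z, hvz, hz₀z⟩ := exists_adj_reachable_induce_compl_singleton hc z₀.2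
  have hz : ¬ K.Reachable ⟨y, _⟩ z := fun h ↦ hz₀ (h.trans hz₀z.symm)
  have hne {u} (hu : K.Reachable ⟨y, _⟩ u) : z.1 ≠ u := fun h ↦ hz (Subtype.ext h ▸ hu)
  have hnadj {u} (hu : K.Reachable ⟨y, _⟩ u) : ¬ G.Adj z u :=
    fun h ↦ hz (hu.trans (Adj.reachable (G := K) h.symm))
  exact hG z v d.fst d.snd hvz.symm hva d.adj (hne hya) (hne hyb) (Ne.symm d.snd.2)
    (hnadj hya) (hnadj hyb) hvb

/-- Delete a vertex whose removal leaves `G` connected; the complement stays connected too. -/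
theorem IsCograph.subsingleton_of_connected_of_connected_compl [Finite V] (hG : IsCograph G)
    (hc : G.Connected) (hcc : Gᶜ.Connected) : Subsingleton V := by
  induction hn : Nat.card V using Nat.strong_induction_on generalizing V with
  | _ n ih =>
  by_contra hV
  rw [not_subsingleton_iff_nontrivial] at hV
  obtain ⟨v, hv⟩ := hc.exists_preconnected_induce_compl_singleton_of_finite
  have hv' := hG.compl.preconnected_induce_compl_singleton hcc (by rwa [compl_compl]) v
  have hcard : Nat.card ({v}ᶜ : Set V) < n := hn ▸ Finite.card_subtype_lt (x := v) (by simp)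
  have hcompl : (G.induce {v}ᶜ)ᶜ = Gᶜ.induce {v}ᶜ := by
    ext a b
    simp [compl_adj, Subtype.ext_iff]
  obtain ⟨a, ha⟩ := hc.preconnected.exists_adj_of_nontrivial v
  obtain ⟨b, hb⟩ := hcc.preconnected.exists_adj_of_nontrivial v
  have : Nonempty ({v}ᶜ : Set V) := ⟨a, ha.ne'⟩
  have := ih _ hcard (hG.of_embedding (Embedding.induce _)) ⟨hv⟩ (hcompl ▸ ⟨hv'⟩) rfl
  obtain rfl : a = b := congrArg Subtype.val
    (Subsingleton.elim (⟨a, ha.ne'⟩ : ({v}ᶜ : Set V)) ⟨b, hb.ne'⟩)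
  exact hb.2 ha

end Cograph

/-! ### Cotrees -/

namespace GraphClass

variable {V : Type} [Finite V] {G : SimpleGraph V} {g h : GraphClass}

/-- The property of an isomorphism class that its members are cographs. -/
protected def IsCograph (g : GraphClass) : Prop := IsCograph g.rep

@[simp]
lemma isCograph_mk : (mk G).IsCograph ↔ IsCograph G := by
  obtain ⟨e⟩ := nonempty_rep_mk_iso G
  exact isCograph_congr e

@[simp]
lemma isCograph_compl : gᶜ.IsCograph ↔ g.IsCograph := by
  have compl {g : GraphClass} (hg : g.IsCograph) : gᶜ.IsCograph := by
    induction g with | mk n G =>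
    rw [compl_mk, isCograph_mk]
    exact (isCograph_mk.1 hg).compl
  exact ⟨fun hg ↦ GraphClass.compl_compl g ▸ compl hg, compl⟩

lemma isCograph_add : (g + h).IsCograph ↔ g.IsCograph ∧ h.IsCograph := by
  induction g with | mk n G => induction h with | mk m H =>
  rw [mk_add_mk, isCograph_mk, isCograph_mk, isCograph_mk, isCograph_sum]

protected lemma isCograph_sum {s : Multiset GraphClass} :
    s.sum.IsCograph ↔ ∀ g ∈ s, g.IsCograph := by
  induction s using Multiset.induction_on with
  | empty =>
    rw [Multiset.sum_zero, ← mk_of_isEmpty (⊥ : SimpleGraph (Fin 0)), isCograph_mk]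
    simp [isCograph_of_subsingleton]
  | cons g s ih => simp [isCograph_add, ih]

lemma isConnected_or_isConnected_compl (hg : g ≠ 0) : g.IsConnected ∨ gᶜ.IsConnected := by
  induction g with | mk n G =>
  rw [ne_eq, ← order_eq_zero, order_mk, Nat.card_fin] at hg
  have : NeZero n := ⟨hg⟩
  rw [compl_mk, isConnected_mk, isConnected_mk]
  exact connected_or_connected_compl G

lemma not_isConnected_sum {s : Multiset GraphClass} (hs : ∀ g ∈ s, g.IsConnected)
    (hcard : s.card ≠ 1) : ¬ s.sum.IsConnected := fun h ↦ by
  have := h.components_eq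
  rw [components_sum hs] at this
  exact hcard (this ▸ Multiset.card_singleton _)

lemma isConnected_compl_sum {s : Multiset GraphClass} (hs : ∀ g ∈ s, g.IsConnected)
    (hcard : 2 ≤ s.card) : s.sumᶜ.IsConnected := by
  refine (isConnected_or_isConnected_compl ?_).resolve_left (not_isConnected_sum hs (by omega))
  intro h0
  have := components_sum hs
  rw [h0, components_zero] at this
  simp [← this] at hcard

lemma eq_mk_bot_of_order_eq_one (hg : g.order = 1) :
    g = mk (⊥ : SimpleGraph (Fin 1)) := by
  induction g with | mk n G =>
  rw [order_mk, Nat.card_fin] at hg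
  subst hg
  rw [Subsingleton.elim G ⊥]

lemma IsCograph.not_isConnected_compl (hg : g.IsCograph) (hc : g.IsConnected)
    (horder : g.order ≠ 1) : ¬ gᶜ.IsConnected := by
  induction g with | mk n G =>
  rw [compl_mk, isConnected_mk]
  intro hcc
  rw [isConnected_mk] at hc
  have := (isCograph_mk.1 hg).subsingleton_of_connected_of_connected_compl hc hcc
  have := hc.nonempty
  exact horder (by rw [order_mk, Nat.card_unique])

lemma finite_order_eq (n : ℕ) : {g : GraphClass | g.order = n}.Finite := by
  refine (Set.finite_range fun G : SimpleGraph (Fin n) ↦ mk G).subset ?_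
  rintro g rfl
  exact ⟨g.rep, mk_rep g⟩

end GraphClass

/-- The isomorphism classes of connected cographs. -/
abbrev ConnectedCograph : Type := {g : GraphClass // g.IsConnected ∧ g.IsCograph}

namespace ConnectedCograph

variable {s : Multiset ConnectedCograph}

open GraphClass

lemma isConnected_of_mem_map_val {g : GraphClass} (hg : g ∈ s.map Subtype.val) :
    g.IsConnected := by
  obtain ⟨t, -, rfl⟩ := Multiset.mem_map.1 hg
  exact t.2.1

lemma isCograph_sum_map_val (s : Multiset ConnectedCograph) :
    (s.map Subtype.val).sum.IsCograph := by
  rw [GraphClass.isCograph_sum]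
  intro g hg
  obtain ⟨t, -, rfl⟩ := Multiset.mem_map.1 hg
  exact t.2.2

/-- The one-vertex graph. -/
noncomputable def single : ConnectedCograph :=
  ⟨mk (⊥ : SimpleGraph (Fin 1)), isConnected_mk.2 .of_subsingleton,
    isCograph_mk.2 (isCograph_of_subsingleton _)⟩

/-- The complement of the disjoint union of at least two connected cographs; for fewer of them the
value is junk. -/
noncomputable def complSum (s : Multiset ConnectedCograph) : ConnectedCograph :=
  if hs : 2 ≤ s.card then
    ⟨(s.map Subtype.val).sumᶜ,
      isConnected_compl_sum (fun _ ↦ isConnected_of_mem_map_val) (by simpa using hs),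
      isCograph_compl.2 (isCograph_sum_map_val s)⟩
  else single

lemma coe_complSum (hs : 2 ≤ s.card) : (complSum s : GraphClass) = (s.map Subtype.val).sumᶜ := by
  rw [complSum, dif_pos hs]

lemma complSum_injOn : Set.InjOn complSum {s | 2 ≤ s.card} := by
  intro s hs t ht hst
  have h := congrArg Subtype.val hst
  rw [coe_complSum hs, coe_complSum ht] at h
  have := congrArg components (compl_injective h)
  rw [components_sum fun _ ↦ isConnected_of_mem_map_val,
    components_sum fun _ ↦ isConnected_of_mem_map_val] at this
  exact Multiset.map_injective Subtype.val_injective this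

lemma eq_single_or_eq_complSum (t : ConnectedCograph) :
    t = single ∨ ∃ s : Multiset ConnectedCograph, 2 ≤ s.card ∧ t = complSum s := by
  refine or_iff_not_imp_left.2 fun ht ↦ ?_
  have hcompl := t.2.2.not_isConnected_compl t.2.1
    fun h ↦ ht (Subtype.ext (eq_mk_bot_of_order_eq_one h))
  obtain ⟨s, hs, hsum⟩ := exists_sum_eq (t : GraphClass)ᶜ
  have hcard : 2 ≤ s.card := by
    by_contra! hlt
    obtain hs0 | hs1 : s.card = 0 ∨ s.card = 1 := by omega
    · obtain rfl := Multiset.card_eq_zero.1 hs0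
      have := t.2.1.order_pos
      rw [← order_compl, ← hsum, Multiset.sum_zero, order_zero] at this
      exact this.false
    · obtain ⟨g, rfl⟩ := Multiset.card_eq_one.1 hs1
      rw [Multiset.sum_singleton] at hsum
      exact hcompl (hsum ▸ hs g (Multiset.mem_singleton_self g))
  have hcog : ∀ g ∈ s, g.IsCograph :=
    GraphClass.isCograph_sum.1 (hsum ▸ isCograph_compl.2 t.2.2)
  lift s to Multiset ConnectedCograph using fun g hg ↦ ⟨hs g hg, hcog g hg⟩
  rw [Multiset.card_map] at hcard
  refine ⟨s, hcard, Subtype.ext ?_⟩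
  rw [coe_complSum hcard, hsum, GraphClass.compl_compl]

/-- The cotree encoding: a connected cograph with more than one vertex is in a unique way the
complement of a disjoint union of at least two connected cographs. -/
noncomputable def cotrees : SeriesReducedTrees ConnectedCograph where
  leafCount t := t.1.order
  leaf := single
  node := complSum
  leafCount_pos t := t.2.1.order_pos
  leafCount_leaf := by rw [single, order_mk, Nat.card_fin]
  leafCount_node {s} hs := by
    rw [coe_complSum hs, order_compl, order_sum, Multiset.map_map, Function.comp_def]
  node_injOn := complSum_injOn
  eq_leaf_or_eq_node := eq_single_or_eq_complSum
  finite_leafCount_eq n := (finite_order_eq n).preimage Subtype.val_injective.injOn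

end ConnectedCograph

/-! ### Signless Laplacians -/

section SignlessLaplacian

open Matrix

variable {V W : Type} [Fintype V] [DecidableEq V] [Fintype W] [DecidableEq W]
  {G H : SimpleGraph V}

open Classical in
/-- The signless Laplacian matrix `D(G) + A(G)`, whose characteristic polynomial is
`qCharPoly G`. -/
noncomputable def signlessLaplacian (G : SimpleGraph V) : Matrix V V ℝ :=
  G.degMatrix ℝ + G.adjMatrix ℝ

lemma charpoly_signlessLaplacian (G : SimpleGraph V) :
    (signlessLaplacian G).charpoly = qCharPoly G := rfl

lemma signlessLaplacian_eq (G : SimpleGraph V) [DecidableRel G.Adj] :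
    signlessLaplacian G = diagonal (G.adjMatrix ℝ *ᵥ 1) + G.adjMatrix ℝ := by
  have hdeg : G.adjMatrix ℝ *ᵥ 1 = fun v ↦ (G.degree v : ℝ) := by
    ext v
    simp
  rw [signlessLaplacian, degMatrix, hdeg]
  congr!

lemma submatrix_signlessLaplacian {K : SimpleGraph W} (e : G ≃g K) :
    (signlessLaplacian K).submatrix e e = signlessLaplacian G := by
  classical
  ext i j
  simp [signlessLaplacian, degMatrix, diagonal_apply, e.map_adj_iff]

lemma qCharPoly_congr {K : SimpleGraph W} (e : G ≃g K) : qCharPoly G = qCharPoly K := by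
  have h := charpoly_reindex e.toEquiv.symm (signlessLaplacian K)
  rw [charpoly_signlessLaplacian, reindex_apply] at h
  rw [← h, ← charpoly_signlessLaplacian, ← submatrix_signlessLaplacian e]
  rfl

lemma genQCospectral_of_iso {K : SimpleGraph W} (e : G ≃g K) : GenQCospectral G K :=
  ⟨qCharPoly_congr e, qCharPoly_congr (complIso e)⟩

lemma signlessLaplacian_compl (G : SimpleGraph V) :
    signlessLaplacian Gᶜ =
      (Fintype.card V - 2 : ℝ) • 1 + vecMulVec 1 1 - signlessLaplacian G := by
  classical
  have hA : Gᶜ.adjMatrix ℝ = vecMulVec 1 1 - 1 - G.adjMatrix ℝ := by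
    rw [← compl_adjMatrix_eq_adjMatrix_compl, sub_sub, eq_sub_iff_add_eq',
      one_add_adjMatrix_add_compl_adjMatrix_eq_of_one]
    ext i j
    simp [vecMulVec_apply]
  have hJ : (vecMulVec 1 1 : Matrix V V ℝ) *ᵥ 1 = Function.const V (Fintype.card V : ℝ) := by
    ext i
    rw [vecMulVec_mulVec]
    simp
  rw [signlessLaplacian_eq, signlessLaplacian_eq, hA, sub_mulVec, sub_mulVec, hJ, one_mulVec]
  ext i j
  simp only [Matrix.add_apply, Matrix.sub_apply, Matrix.smul_apply, diagonal_apply, one_apply]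
  split_ifs <;> simp
  ring

lemma signlessLaplacian_sum (G : SimpleGraph V) (R : SimpleGraph W) :
    signlessLaplacian (G ⊕g R) = fromBlocks (signlessLaplacian G) 0 0 (signlessLaplacian R) := by
  classical
  have hA : (G ⊕g R).adjMatrix ℝ = fromBlocks (G.adjMatrix ℝ) 0 0 (R.adjMatrix ℝ) := by
    ext (i | i) (j | j) <;> simp
  have hone : (1 : V ⊕ W → ℝ) = Sum.elim (1 : V → ℝ) (1 : W → ℝ) := Sum.elim_one_one.symm
  simp only [signlessLaplacian_eq, hA, hone, fromBlocks_mulVec, ← fromBlocks_diagonal,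
    fromBlocks_add, Sum.elim_comp_inl, Sum.elim_comp_inr, zero_mulVec, add_zero, zero_add]

/-- Similarity of the signless Laplacians of two graphs through a matrix with all row and column
sums equal to one. Since such a matrix commutes with the all-ones matrix, it makes the signless
Laplacians of the complements similar as well. -/
def GenQSimilar (G H : SimpleGraph V) : Prop :=
  ∃ U : (Matrix V V ℝ)ˣ, U.val *ᵥ 1 = 1 ∧ 1 ᵥ* U.val = 1 ∧
    SemiconjBy U.val (signlessLaplacian G) (signlessLaplacian H)

lemma GenQSimilar.compl (h : GenQSimilar G H) : GenQSimilar Gᶜ Hᶜ := by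
  obtain ⟨U, hrow, hcol, hU⟩ := h
  refine ⟨U, hrow, hcol, ?_⟩
  have hJ : Commute U.val (vecMulVec 1 1) := by
    rw [commute_iff_eq, mul_vecMulVec, vecMulVec_mul, hrow, hcol]
  rw [signlessLaplacian_compl, signlessLaplacian_compl]
  exact (((SemiconjBy.one_right _).smul_right _).add_right hJ).sub_right hU

lemma GenQSimilar.qCospectral (h : GenQSimilar G H) : QCospectral G H := by
  obtain ⟨U, -, -, hU⟩ := h
  rw [QCospectral, ← charpoly_signlessLaplacian, ← charpoly_signlessLaplacian,
    ← charpoly_units_conj U, hU.eq, Matrix.mul_assoc, ← coe_units_inv, U.mul_inv, Matrix.mul_one]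

lemma GenQSimilar.genQCospectral (h : GenQSimilar G H) : GenQCospectral G H :=
  ⟨h.qCospectral, h.compl.qCospectral⟩

lemma GenQSimilar.sum_right (h : GenQSimilar G H) (R : SimpleGraph W) :
    GenQSimilar (G ⊕g R) (H ⊕g R) := by
  obtain ⟨U, hrow, hcol, hU⟩ := h
  have hone : (1 : V ⊕ W → ℝ) = Sum.elim (1 : V → ℝ) (1 : W → ℝ) := Sum.elim_one_one.symm
  refine ⟨⟨fromBlocks U 0 0 1, fromBlocks U⁻¹.val 0 0 1, ?_, ?_⟩, ?_, ?_, ?_⟩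
  · simp [fromBlocks_multiply]
  · simp [fromBlocks_multiply]
  · rw [hone, fromBlocks_mulVec]
    simp [hrow]
  · rw [hone, vecMul_fromBlocks]
    simp [hcol]
  · simp [SemiconjBy, signlessLaplacian_sum, fromBlocks_multiply, hU.eq]

lemma signlessLaplacian_claw : signlessLaplacian (starGraph (0 : Fin 4)) =
    !![3, 1, 1, 1; 1, 1, 0, 0; 1, 0, 1, 0; 1, 0, 0, 1] := by
  have hA : (starGraph (0 : Fin 4)).adjMatrix ℝ =
      !![0, 1, 1, 1; 1, 0, 0, 0; 1, 0, 0, 0; 1, 0, 0, 0] := by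
    ext i j
    fin_cases i <;> fin_cases j <;> simp
  rw [signlessLaplacian_eq, hA]
  ext i j
  fin_cases i <;> fin_cases j <;> simp [dotProduct, Fin.sum_univ_four]
  norm_num

lemma signlessLaplacian_claw_compl : signlessLaplacian (starGraph (0 : Fin 4))ᶜ =
    !![0, 0, 0, 0; 0, 2, 1, 1; 0, 1, 2, 1; 0, 1, 1, 2] := by
  rw [signlessLaplacian_compl, signlessLaplacian_claw]
  ext i j
  fin_cases i <;> fin_cases j <;> norm_num

/-- The involution `J / 2 - 1`, which conjugates the signless Laplacians of the claw and of its
complement into each other. -/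
noncomputable def clawInvolution : Matrix (Fin 4) (Fin 4) ℝ :=
  !![-1 / 2, 1 / 2, 1 / 2, 1 / 2; 1 / 2, -1 / 2, 1 / 2, 1 / 2;
    1 / 2, 1 / 2, -1 / 2, 1 / 2; 1 / 2, 1 / 2, 1 / 2, -1 / 2]

lemma clawInvolution_mul_self : clawInvolution * clawInvolution = 1 := by
  ext i j
  fin_cases i <;> fin_cases j <;> simp [clawInvolution, mul_apply, Fin.sum_univ_four] <;> norm_num

lemma genQSimilar_claw_compl : GenQSimilar (starGraph (0 : Fin 4)) (starGraph (0 : Fin 4))ᶜ := by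
  refine ⟨⟨clawInvolution, clawInvolution, clawInvolution_mul_self, clawInvolution_mul_self⟩,
    ?_, ?_, ?_⟩
  · ext i
    fin_cases i <;> simp [clawInvolution, mulVec, dotProduct, Fin.sum_univ_four] <;> norm_num
  · ext i
    fin_cases i <;> simp [clawInvolution, vecMul, dotProduct, Fin.sum_univ_four] <;> norm_num
  · rw [SemiconjBy, signlessLaplacian_claw, signlessLaplacian_claw_compl]
    ext i j
    fin_cases i <;> fin_cases j <;> simp [clawInvolution, mul_apply, Fin.sum_univ_four] <;> norm_num

end SignlessLaplacian

/-! ### Mates of isomorphism classes -/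

/-- The property of a graph that it has a generalized `Q`-cospectral mate; a mate may be taken on
the same vertex type. -/
def HasGenQMate {V : Type} [Fintype V] [DecidableEq V] (G : SimpleGraph V) : Prop :=
  ∃ H : SimpleGraph V, GenQCospectral G H ∧ ¬ Nonempty (G ≃g H)

namespace GraphClass

variable {g : GraphClass}

/-- The property of an isomorphism class that one of its members is generalized `Q`-similar to a
graph outside the class. Unlike the existence of a generalized `Q`-cospectral mate, it passes to
disjoint unions with a fixed graph and to complements alike. -/
def HasSimilarMate (g : GraphClass) : Prop :=
  ∃ (V : Type) (_ : Fintype V) (_ : DecidableEq V) (G H : SimpleGraph V),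
    GenQSimilar G H ∧ mk G = g ∧ mk H ≠ g

lemma HasSimilarMate.compl (hg : g.HasSimilarMate) : gᶜ.HasSimilarMate := by
  obtain ⟨V, _, _, G, H, hGH, rfl, hne⟩ := hg
  refine ⟨V, _, _, Gᶜ, Hᶜ, hGH.compl, (compl_mk G).symm, ?_⟩
  rw [← compl_mk]
  exact compl_injective.ne hne

lemma HasSimilarMate.add (hg : g.HasSimilarMate) (r : GraphClass) : (g + r).HasSimilarMate := by
  obtain ⟨V, _, _, G, H, hGH, rfl, hne⟩ := hg
  induction r with | mk n R =>
  refine ⟨V ⊕ Fin n, _, _, G ⊕g R, H ⊕g R, hGH.sum_right R, (mk_add_mk G R).symm, ?_⟩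
  rw [← mk_add_mk]
  exact fun h ↦ hne (GraphClass.add_right_cancel h)

lemma HasSimilarMate.hasGenQMate {V : Type} [Fintype V] [DecidableEq V] {G : SimpleGraph V}
    (hG : (mk G).HasSimilarMate) : HasGenQMate G := by
  obtain ⟨V', _, _, G', H', hGH, hG', hH'⟩ := hG
  obtain ⟨e⟩ := mk_eq_mk.1 hG'
  let f := Iso.map e.toEquiv H'
  have hGG' := genQCospectral_of_iso e.symm
  have hHH' := genQCospectral_of_iso f
  refine ⟨_, ⟨hGG'.1.trans (hGH.genQCospectral.1.trans hHH'.1),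
    hGG'.2.trans (hGH.genQCospectral.2.trans hHH'.2)⟩, fun ⟨i⟩ ↦ hH' ?_⟩
  exact mk_eq_mk.2 ⟨f.trans i.symm⟩

end GraphClass

namespace ConnectedCograph

open GraphClass

/-- The claw `K₁,₃`. -/
noncomputable def claw : ConnectedCograph :=
  ⟨mk (starGraph (0 : Fin 4)), isConnected_mk.2 (connected_starGraph 0), isCograph_mk.2 <| by
    simp only [isCograph_iff_forall_not_path, starGraph_adj]
    decide⟩

lemma hasSimilarMate_claw : claw.1.HasSimilarMate := by
  refine ⟨Fin 4, _, _, _, _, genQSimilar_claw_compl, rfl, fun h ↦ ?_⟩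
  refine claw.2.2.not_isConnected_compl claw.2.1 (by simp [claw]) ?_
  rw [claw, compl_mk, h]
  exact claw.2.1

lemma hasSimilarMate_of_hasBranch_claw {t : ConnectedCograph} (ht : cotrees.HasBranch claw t) :
    t.1.HasSimilarMate := by
  induction ht with
  | self => exact hasSimilarMate_claw
  | child hs hx _ ih =>
    obtain ⟨s, rfl⟩ := Multiset.exists_cons_of_mem hx
    change (complSum _).1.HasSimilarMate
    rw [coe_complSum hs, Multiset.map_cons, Multiset.sum_cons]
    exact (ih.add _).compl

end ConnectedCograph

/-! ### Counting -/

open GraphClass ConnectedCograph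

section ClassCount

variable {n : ℕ} {P P' : SimpleGraph (Fin n) → Prop}

lemma classCount_eq_ncard (P : SimpleGraph (Fin n) → Prop) :
    classCount n P = (GraphClass.mk '' {G | P G}).ncard := by
  let f : Quot (fun G H : {G // P G} ↦ Nonempty (G.1 ≃g H.1)) → GraphClass :=
    Quot.lift (fun G ↦ GraphClass.mk G.1) fun G H h ↦ mk_eq_mk.2 h
  have hf : Function.Injective f := by
    rintro ⟨G⟩ ⟨H⟩ h
    exact Quot.sound (mk_eq_mk.1 h)
  have hrange : Set.range f = GraphClass.mk '' {G | P G} := by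
    rw [Set.range_quot_lift, Set.image_eq_range]
    rfl
  rw [classCount, ← Nat.card_range_of_injective hf, hrange, Set.ncard_def]
  rfl

lemma classCount_mono (h : ∀ G, P G → P' G) : classCount n P ≤ classCount n P' := by
  rw [classCount_eq_ncard, classCount_eq_ncard]
  exact Set.ncard_le_ncard (Set.image_mono h) (Set.toFinite _)

lemma card_trees_le_classCount (n : ℕ) :
    (cotrees.trees n).card ≤ classCount n fun G ↦ IsCograph G := by
  rw [classCount_eq_ncard, ← Set.ncard_coe_finset,
    ← Set.ncard_image_of_injective _ Subtype.val_injective]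
  refine Set.ncard_le_ncard ?_ (Set.toFinite _)
  rintro _ ⟨t, ht, rfl⟩
  obtain rfl : t.1.order = n := cotrees.mem_trees.1 ht
  exact ⟨t.1.rep, t.2.2, mk_rep t.1⟩

lemma GraphClass.IsCograph.hasSimilarMate_or_exists {g : GraphClass} (hg : g.IsCograph)
    (h0 : g ≠ 0) :
    g.HasSimilarMate ∨ ∃ t ∈ cotrees.treesAvoiding claw g.order, t.1 = g ∨ t.1ᶜ = g := by
  have of_isConnected {g : GraphClass} (hg : g.IsCograph) (hc : g.IsConnected) :
      g.HasSimilarMate ∨ ∃ t ∈ cotrees.treesAvoiding claw g.order, t.1 = g := by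
    refine or_iff_not_imp_left.2 fun hmate ↦
      ⟨⟨g, hc, hg⟩, cotrees.mem_treesAvoiding.2 ⟨rfl, fun h ↦ hmate ?_⟩, rfl⟩
    exact hasSimilarMate_of_hasBranch_claw h
  obtain hc | hc := isConnected_or_isConnected_compl h0
  · exact (of_isConnected hg hc).imp_right fun ⟨t, ht, htg⟩ ↦ ⟨t, ht, .inl htg⟩
  · refine (of_isConnected (isCograph_compl.2 hg) hc).imp (fun h ↦ ?_) fun ⟨t, ht, htg⟩ ↦
      ⟨t, order_compl g ▸ ht, .inr (by rw [htg, GraphClass.compl_compl])⟩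
    exact GraphClass.compl_compl g ▸ h.compl

lemma classCount_isCograph_le (hn : n ≠ 0) :
    classCount n (fun G ↦ IsCograph G) ≤
      classCount n (fun G ↦ IsCograph G ∧ HasGenQMate G) +
        2 * (cotrees.treesAvoiding claw n).card := by
  set A : Set GraphClass := Subtype.val '' (cotrees.treesAvoiding claw n : Set ConnectedCograph)
  have hA : A.Finite := (Finset.finite_toSet _).image _
  have hcover : GraphClass.mk '' {G : SimpleGraph (Fin n) | IsCograph G} ⊆
      GraphClass.mk '' {G : SimpleGraph (Fin n) | IsCograph G ∧ HasGenQMate G} ∪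
        (A ∪ compl '' A) := by
    rintro _ ⟨G, hG, rfl⟩
    have h0 : GraphClass.mk G ≠ 0 := by
      rwa [ne_eq, ← order_eq_zero, order_mk, Nat.card_fin]
    obtain h | ⟨t, ht, h⟩ := (isCograph_mk.2 hG).hasSimilarMate_or_exists h0
    · exact .inl ⟨G, ⟨hG, h.hasGenQMate⟩, rfl⟩
    · rw [order_mk, Nat.card_fin] at ht
      exact .inr (h.imp (fun h ↦ ⟨t, ht, h⟩) fun h ↦ ⟨t, ⟨t, ht, rfl⟩, h⟩)
  have hcard : A.ncard ≤ (cotrees.treesAvoiding claw n).card := by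
    rw [← Set.ncard_coe_finset]
    exact Set.ncard_image_le (Finset.finite_toSet _)
  rw [classCount_eq_ncard, classCount_eq_ncard]
  calc _ ≤ _ := Set.ncard_le_ncard hcover ((Set.toFinite _).union (hA.union (hA.image _)))
    _ ≤ _ + (A.ncard + (compl '' A).ncard) :=
      (Set.ncard_union_le _ _).trans (by gcongr; exact Set.ncard_union_le _ _)
    _ ≤ _ + 2 * (cotrees.treesAvoiding claw n).card := by
      have := Set.ncard_image_le (f := compl) hA
      omega

lemma one_sub_le_classCount_div_classCount (hn : 2 ≤ n) :
    1 - 2 * (((cotrees.treesAvoiding claw n).card : ℝ) / (cotrees.trees n).card) ≤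
      (classCount n (fun G ↦ IsCograph G ∧ HasGenQMate G) : ℝ) /
        classCount n (fun G ↦ IsCograph G) := by
  have htrees : (0 : ℝ) < (cotrees.trees n).card := by
    exact_mod_cast (Nat.two_pow_pos _).trans_le (cotrees.two_pow_le_card_trees hn)
  have hle : ((cotrees.trees n).card : ℝ) ≤ classCount n fun G ↦ IsCograph G := by
    exact_mod_cast card_trees_le_classCount n
  have hcover : (classCount n (fun G ↦ IsCograph G) : ℝ) ≤
      classCount n (fun G ↦ IsCograph G ∧ HasGenQMate G) +
        2 * (cotrees.treesAvoiding claw n).card := by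
    exact_mod_cast classCount_isCograph_le (by omega)
  have hpos := htrees.trans_le hle
  calc _ ≤ 1 - 2 * (((cotrees.treesAvoiding claw n).card : ℝ) /
        classCount n fun G ↦ IsCograph G) := by gcongr
    _ ≤ _ := by
      rw [le_div_iff₀ hpos, sub_mul, mul_assoc, div_mul_cancel₀ _ hpos.ne']
      linarith

end ClassCount

/-- **Almost all cographs have a generalized `Q`-cospectral mate.** -/
theorem almost_all_cographs_have_generalized_qCospectral_mate :
    Filter.Tendsto
      (fun n : ℕ =>
        (classCount n (fun G => IsCograph G ∧
            ∃ H : SimpleGraph (Fin n), GenQCospectral G H ∧ ¬ Nonempty (G ≃g H)) : ℝ) /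
        (classCount n (fun G => IsCograph G) : ℝ))
      Filter.atTop (nhds 1) := by
  have hlower : Tendsto (fun n ↦ 1 - 2 * (((cotrees.treesAvoiding claw n).card : ℝ) /
      (cotrees.trees n).card)) atTop (𝓝 1) := by
    simpa using ((cotrees.tendsto_card_treesAvoiding_div_card_trees claw).const_mul 2).const_sub 1
  refine tendsto_of_tendsto_of_tendsto_of_le_of_le' hlower tendsto_const_nhds ?_
    (.of_forall fun n ↦ ?_)
  · filter_upwards [eventually_ge_atTop 2] with n hn
    exact one_sub_le_classCount_div_classCount hn
  · exact div_le_one_of_le₀ (mod_cast classCount_mono fun _ hG ↦ hG.1) (Nat.cast_nonneg _)
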